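/- arXiv:2510.07646 — 2 statements merged into one kernel-verified Lean document; each statement's English description precedes it below -/
import Mathlib

section
/- Let A be a finite nonempty set, π a probability mass function on A, g : A → ℝ, and ε > 0 such that ε·g(a) ≤ 1 for all a ∈ A. Then Σ_{a∈A} π(a)·exp(ε·g(a)) ≤ exp( ε·Σ_{a∈A} π(a)·g(a) + ε²·Σ_{a∈A} π(a)·g(a)² ). -/
/-! Averaging `exp x ≤ 1 + x + x ^ 2` (valid for `x ≤ 1`) at `x = ε * g a` against `π` gives
`1 + y`, where `y` is the exponent on the right-hand side; then `1 + y ≤ exp y`. -/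

/-- For `x ≥ -1` this is the second-order Taylor bound; for `x < -1` it holds because
`exp x ≤ 1` and `x + x ^ 2 = x * (x + 1) ≥ 0`. -/
lemma exp_le_one_add_add_sq {x : ℝ} (hx : x ≤ 1) : Real.exp x ≤ 1 + x + x ^ 2 := by
  rcases le_or_gt (-1) x with h | h
  · have := (abs_le.mp (Real.abs_exp_sub_one_sub_id_le (abs_le.mpr ⟨h, hx⟩))).2
    linarith
  · have : Real.exp x ≤ 1 := Real.exp_le_one_iff.mpr (by linarith)
    nlinarith

/-- **One-step exponential-weights potential inequality.**
For a probability mass function `π` on a finite nonempty set `A`, a gain vector `g`, and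
`ε > 0` with `ε·g(a) ≤ 1` for all `a`, we have
`Σ_a π(a)·exp(ε·g(a)) ≤ exp( ε·Σ_a π(a)·g(a) + ε²·Σ_a π(a)·g(a)² )`. -/
theorem exp_weights_potential_step
    {A : Type*} [Fintype A] [Nonempty A]
    (π g : A → ℝ) (hπ0 : ∀ a, 0 ≤ π a) (hπ1 : ∑ a : A, π a = 1)
    (ε : ℝ) (hε : 0 < ε) (hg : ∀ a, ε * g a ≤ 1) :
    ∑ a : A, π a * Real.exp (ε * g a)
      ≤ Real.exp (ε * ∑ a : A, π a * g a + ε ^ 2 * ∑ a : A, π a * (g a) ^ 2) := by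
  calc ∑ a : A, π a * Real.exp (ε * g a)
      ≤ ∑ a : A, π a * (1 + ε * g a + (ε * g a) ^ 2) :=
        Finset.sum_le_sum fun a _ =>
          mul_le_mul_of_nonneg_left (exp_le_one_add_add_sq (hg a)) (hπ0 a)
    _ = (ε * ∑ a : A, π a * g a + ε ^ 2 * ∑ a : A, π a * (g a) ^ 2) + 1 := by
        rw [← hπ1, Finset.mul_sum, Finset.mul_sum, ← Finset.sum_add_distrib,
          ← Finset.sum_add_distrib]
        refine Finset.sum_congr rfl fun a _ => ?_
        rw [hπ1]
        ring
    _ ≤ _ := Real.add_one_le_exp _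
end

section
/- Let U be a finite nonempty set, π a probability mass function on U with π(S) > 0 for all S ∈ U, and r : U → [0,1]. Then Σ_{S'∈U} π(S') · [ Σ_{S∈U} π(S)·( 1 − 1{S' = S}·(1 − r(S))/π(S) )² ] = 2·Σ_{S∈U} π(S)·r(S) − 1 + Σ_{S∈U} (1 − r(S))², and this quantity is at most |U|. -/
/-!
For a fixed drawn arm `S'` only the summand `S = S'` differs from `π S`, so the inner sum is
`1 - 2 (1 - r S') + (1 - r S')² / π S'`; weighting by `π S'` cancels the division, and summing
gives the closed form. The bound holds arm by arm, once the `1` in the closed form is written as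
`∑ S, π S`: since `π ≤ 1` and `0 ≤ r ≤ 1`,
`π (2 r - 1) + (1 - r)² ≤ π r + (1 - r)² ≤ r + (1 - r)² ≤ 1`.
-/

/-- **Second-moment computation in the EXP3-N-CS regret proof.**
When the arm `S'` is drawn from the probability mass function `π` on the finite set `U`
and the IPW reward-estimate increment is `g(S) = 1 − 1{S' = S}·(1 − r(S))/π(S)` with
rewards `r(S) ∈ [0,1]`, the expectation over `S' ∼ π` of `Σ_S π(S)·g(S)²` equals
`2·Σ_S π(S)·r(S) − 1 + Σ_S (1 − r(S))²`, and is at most `|U|`. -/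
theorem ipw_second_moment
    {U : Type*} [Fintype U] [DecidableEq U] [Nonempty U]
    (π r : U → ℝ) (hπ0 : ∀ S, 0 < π S) (hπ1 : ∑ S : U, π S = 1)
    (hr : ∀ S, r S ∈ Set.Icc (0 : ℝ) 1) :
    (∑ S' : U, π S' * ∑ S : U, π S * (1 - (if S' = S then (1 - r S) / π S else 0)) ^ 2)
        = 2 * (∑ S : U, π S * r S) - 1 + ∑ S : U, (1 - r S) ^ 2
    ∧ (∑ S' : U, π S' * ∑ S : U, π S * (1 - (if S' = S then (1 - r S) / π S else 0)) ^ 2)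
        ≤ (Fintype.card U : ℝ) := by
  have hinner : ∀ S' : U,
      π S' * ∑ S : U, π S * (1 - (if S' = S then (1 - r S) / π S else 0)) ^ 2
        = 2 * (π S' * r S') - π S' + (1 - r S') ^ 2 := by
    intro S'
    have hne := (hπ0 S').ne'
    have hterm : ∀ S : U, π S * (1 - (if S' = S then (1 - r S) / π S else 0)) ^ 2
        = π S + (if S' = S then (1 - r S) ^ 2 / π S - 2 * (1 - r S) else 0) := by
      intro S
      have hS := (hπ0 S).ne'
      split_ifs
      · field_simp
        ring
      · ring
    simp only [hterm, Finset.sum_add_distrib, hπ1, Finset.sum_ite_eq, Finset.mem_univ, if_true]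
    field_simp
    ring
  have heq : (∑ S' : U, π S' * ∑ S : U, π S * (1 - (if S' = S then (1 - r S) / π S else 0)) ^ 2)
      = 2 * (∑ S : U, π S * r S) - 1 + ∑ S : U, (1 - r S) ^ 2 := by
    simp only [hinner, Finset.sum_add_distrib, Finset.sum_sub_distrib, hπ1, Finset.mul_sum]
  refine ⟨heq, ?_⟩
  simp only [hinner]
  have hbound : ∀ S ∈ (Finset.univ : Finset U),
      2 * (π S * r S) - π S + (1 - r S) ^ 2 ≤ (1 : ℝ) := by
    intro S _
    obtain ⟨h0, h1⟩ := hr S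
    have hle : π S ≤ 1 :=
      hπ1 ▸ Finset.single_le_sum (fun i _ => (hπ0 i).le) (Finset.mem_univ S)
    nlinarith [mul_nonneg (hπ0 S).le (sub_nonneg.2 h1), mul_nonneg h0 (sub_nonneg.2 hle),
      mul_nonneg h0 (sub_nonneg.2 h1)]
  simpa using Finset.sum_le_sum hbound
end
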